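/- Let x* be a local minimizer of (NLP). Then for every direction d in the critical cone C(x*) there exists a Fritz John multiplier (λ₀,λ,μ) ∈ Λ₀(x*) (depending on d) such that dᵀ∇²ₓₓL^g(x*,λ₀,λ,μ)d ≥ 0. -/

import Mathlib

open scoped BigOperators Pointwise
open Matrix

attribute [local instance] Classical.propDecidable

noncomputable section

/-- The gradient vector of `φ` at `x` (the vector of partial derivatives). -/
def gradVec {n : ℕ} (φ : (Fin n → ℝ) → ℝ) (x : Fin n → ℝ) : Fin n → ℝ :=
  fun k => fderiv ℝ φ x (Pi.single k 1)

/-- The quadratic form `d ↦ dᵀ ∇²φ(x) d` of the Hessian of `φ` at `x`. -/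
def hessQ {n : ℕ} (φ : (Fin n → ℝ) → ℝ) (x d : Fin n → ℝ) : ℝ :=
  iteratedFDeriv ℝ 2 φ x ![d, d]

/-- Feasibility for the problem (NLP). -/
def Feas {n m p : ℕ} (h : Fin m → (Fin n → ℝ) → ℝ) (g : Fin p → (Fin n → ℝ) → ℝ)
    (x : Fin n → ℝ) : Prop :=
  (∀ i, h i x = 0) ∧ ∀ j, g j x ≤ 0

/-- The Lagrangian of (NLP). -/
def Lagr {n m p : ℕ} (f : (Fin n → ℝ) → ℝ) (h : Fin m → (Fin n → ℝ) → ℝ)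
    (g : Fin p → (Fin n → ℝ) → ℝ) (lam : Fin m → ℝ) (mu : Fin p → ℝ) (x : Fin n → ℝ) : ℝ :=
  f x + ∑ i, lam i * h i x + ∑ j, mu j * g j x

/-- `(lam, mu)` is a Lagrange multiplier at `xs`, i.e. `(lam, mu) ∈ Λ(xs)`. -/
def IsLagMult {n m p : ℕ} (f : (Fin n → ℝ) → ℝ) (h : Fin m → (Fin n → ℝ) → ℝ)
    (g : Fin p → (Fin n → ℝ) → ℝ) (xs : Fin n → ℝ) (lam : Fin m → ℝ) (mu : Fin p → ℝ) : Prop :=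
  (∀ j, 0 ≤ mu j) ∧ fderiv ℝ (Lagr f h g lam mu) xs = 0 ∧ ∀ j, mu j * g j xs = 0

/-- The Mangasarian-Fromovitz constraint qualification at `xs`. -/
def MFCQ {n m p : ℕ} (h : Fin m → (Fin n → ℝ) → ℝ) (g : Fin p → (Fin n → ℝ) → ℝ)
    (xs : Fin n → ℝ) : Prop :=
  LinearIndependent ℝ (fun i : Fin m => fderiv ℝ (h i) xs) ∧
  ∃ d : Fin n → ℝ, (∀ i, fderiv ℝ (h i) xs d = 0) ∧
    ∀ j, g j xs = 0 → fderiv ℝ (g j) xs d < 0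

/-- Membership in the critical cone `C(xs)`. -/
def critCone {n m p : ℕ} (f : (Fin n → ℝ) → ℝ) (h : Fin m → (Fin n → ℝ) → ℝ)
    (g : Fin p → (Fin n → ℝ) → ℝ) (xs d : Fin n → ℝ) : Prop :=
  fderiv ℝ f xs d = 0 ∧ (∀ i, fderiv ℝ (h i) xs d = 0) ∧
    ∀ j, g j xs = 0 → fderiv ℝ (g j) xs d ≤ 0

/-- Membership in the critical subspace `S(xs)`. -/
def critSub {n m p : ℕ} (h : Fin m → (Fin n → ℝ) → ℝ) (g : Fin p → (Fin n → ℝ) → ℝ)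
    (xs d : Fin n → ℝ) : Prop :=
  (∀ i, fderiv ℝ (h i) xs d = 0) ∧ ∀ j, g j xs = 0 → fderiv ℝ (g j) xs d = 0

/-- The Jacobian matrix `J(x)` of equality and active inequality constraints
(activity taken at the base point `xs`). -/
def Jac {n m p : ℕ} (h : Fin m → (Fin n → ℝ) → ℝ) (g : Fin p → (Fin n → ℝ) → ℝ)
    (xs x : Fin n → ℝ) : Matrix (Fin m ⊕ {j : Fin p // g j xs = 0}) (Fin n) ℝ :=
  Matrix.of fun i k =>
    Sum.elim (fun i' => fderiv ℝ (h i') x (Pi.single k 1))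
      (fun j' => fderiv ℝ (g j'.1) x (Pi.single k 1)) i

/-- A first-order cone: the (direct) sum of a linear subspace and a ray. -/
def IsFirstOrderCone {n : ℕ} (K : Set (Fin n → ℝ)) : Prop :=
  ∃ (W : Submodule ℝ (Fin n → ℝ)) (d0 : Fin n → ℝ),
    K = {x | ∃ w ∈ W, ∃ r : ℝ, 0 ≤ r ∧ x = w + r • d0}

/-- The rank of a family of vectors: the dimension of its linear span. -/
def famRank {ι : Type*} {n : ℕ} (v : ι → (Fin n → ℝ)) : ℕ :=
  Module.finrank ℝ (Submodule.span ℝ (Set.range v))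

/-- The generalized Lagrangian of (NLP). -/
def LagrG {n m p : ℕ} (f : (Fin n → ℝ) → ℝ) (h : Fin m → (Fin n → ℝ) → ℝ)
    (g : Fin p → (Fin n → ℝ) → ℝ) (l0 : ℝ) (lam : Fin m → ℝ) (mu : Fin p → ℝ)
    (x : Fin n → ℝ) : ℝ :=
  l0 * f x + ∑ i, lam i * h i x + ∑ j, mu j * g j x

/-- `(l0, lam, mu)` is a Fritz John (generalized Lagrange) multiplier at `xs`. -/
def IsFJMult {n m p : ℕ} (f : (Fin n → ℝ) → ℝ) (h : Fin m → (Fin n → ℝ) → ℝ)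
    (g : Fin p → (Fin n → ℝ) → ℝ) (xs : Fin n → ℝ) (l0 : ℝ) (lam : Fin m → ℝ)
    (mu : Fin p → ℝ) : Prop :=
  0 ≤ l0 ∧ (∀ j, 0 ≤ mu j) ∧ fderiv ℝ (LagrG f h g l0 lam mu) xs = 0 ∧
    (∀ j, mu j * g j xs = 0) ∧ (l0, lam, mu) ≠ (0, 0, 0)

/-!
Suppose first that the gradients of the equality constraints are linearly independent. An arc
`x + t d + t² z / 2` with `h'(x) z + h''(x)[d, d] = 0` satisfies the equality constraints up to
`o(t²)`, so by the Lyusternik–Graves theorem an `o(t²)` correction moves it into `{h = 0}`. Along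
it a function `φ` changes by `t φ'(x) d + t² (φ'(x) z + φ''(x)[d, d]) / 2 + o(t²)`. Minimality
therefore forbids a `z` for which the last bracket is negative for the objective and all active
constraints whose derivative vanishes along `d`: an affine system in `z` has no solution, and a
theorem of the alternative gives multipliers. The terms in `z` yield stationarity of the Lagrangian,
the constant terms the sign of its Hessian along `d`. If the gradients are dependent, a dependency,
with the right sign, is itself a multiplier with `λ₀ = 0` and `μ = 0`.
-/

open Asymptotics Filter Set Topology

section Taylor

variable {E F : Type*} [NormedAddCommGroup E] [NormedSpace ℝ E] [NormedAddCommGroup F]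
  [NormedSpace ℝ F] {φ : E → F} {x : E}

lemma isLittleO_sub_taylor_two (hφ : ContDiffAt ℝ 2 φ x) :
    (fun y => φ y - (φ x + fderiv ℝ φ x (y - x) +
      (1 / 2 : ℝ) • iteratedFDeriv ℝ 2 φ x ![y - x, y - x])) =o[𝓝 x] fun y => ‖y - x‖ ^ 2 := by
  set B := fderiv ℝ (fderiv ℝ φ) x with hB
  have hsymm : IsSymmSndFDerivAt ℝ φ x := hφ.isSymmSndFDerivAt (by simp)
  have hB' : HasFDerivAt (fderiv ℝ φ) B x :=
    ((hφ.fderiv_right (m := 1) le_rfl).differentiableAt one_ne_zero).hasFDerivAt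
  let R : E → F := fun y => φ y - fderiv ℝ φ x (y - x) - (1 / 2 : ℝ) • B (y - x) (y - x)
  have hR : ∀ᶠ y in 𝓝 x, HasFDerivAt R (fderiv ℝ φ y - fderiv ℝ φ x - B (y - x)) y := by
    filter_upwards [hφ.eventually (by simp)] with y hy
    have hsub : HasFDerivAt (fun y => y - x) (ContinuousLinearMap.id ℝ E) y :=
      (hasFDerivAt_id y).sub_const x
    have hquad := ((B.hasFDerivAt.comp y hsub).clm_apply hsub).const_smul (1 / 2 : ℝ)
    refine (((hy.differentiableAt two_ne_zero).hasFDerivAt.sub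
      ((fderiv ℝ φ x).hasFDerivAt.comp y hsub)).sub hquad).congr_fderiv ?_
    ext v
    have : B v (y - x) = B (y - x) v := hsymm v (y - x)
    simp only [ContinuousLinearMap.comp_id, Function.comp_apply, _root_.sub_apply,
      _root_.add_apply, _root_.smul_apply, ContinuousLinearMap.flip_apply, this]
    module
  obtain ⟨ε, hε, hball⟩ := Metric.eventually_nhds_iff_ball.1 hR
  have hx : x ∈ Metric.ball x ε := Metric.mem_ball_self hε
  have hnhds : 𝓝[Metric.ball x ε] x = 𝓝 x := Metric.isOpen_ball.nhdsWithin_eq hx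
  have remainder_isLittleO := (convex_ball x ε).isLittleO_pow_succ (n := 1) hx
    (fun y hy => (hball y hy).hasFDerivWithinAt)
    (by simpa only [hnhds, pow_one] using hB'.isLittleO.norm_right)
  rw [hnhds] at remainder_isLittleO
  refine remainder_isLittleO.congr_left fun y => ?_
  simp only [R, sub_self, map_zero, smul_zero, sub_zero,
    iteratedFDeriv_two_apply, ← hB, cons_val_zero, cons_val_one]
  abel

end Taylor

section Asymptotics

variable {α E : Type*} [NormedAddCommGroup E] [NormedSpace ℝ E] {l : Filter α}

lemma isBigO_smul_const (r : α → ℝ) (v : E) : (fun t => r t • v) =O[l] r :=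
  .of_bound ‖v‖ (.of_forall fun t => by rw [norm_smul, mul_comm])

lemma eventually_neg_of_isLittleO_sub_mul {r ρ : α → ℝ} {b : ℝ} (hb : b < 0)
    (hρ : ∀ᶠ t in l, 0 < ρ t) (hr : (fun t => r t - b * ρ t) =o[l] ρ) : ∀ᶠ t in l, r t < 0 := by
  filter_upwards [hρ, hr.def (half_pos (neg_pos.2 hb))] with t hpos hclose
  rw [Real.norm_eq_abs, Real.norm_of_nonneg hpos.le] at hclose
  nlinarith [(abs_le.1 hclose).2]

end Asymptotics

/-- `γ` is a one-sided second-order arc `γ t = x + t d + t² z / 2 + o(t²)` as `t ↓ 0`: the second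
derivatives `z` of such arcs inside a set form its second-order tangent set at `x` along `d`. -/
def IsParabolicArc {E : Type*} [NormedAddCommGroup E] [NormedSpace ℝ E] (γ : ℝ → E)
    (x d z : E) : Prop :=
  (fun t => γ t - (x + t • d + (t ^ 2 / 2) • z)) =o[𝓝[>] 0] fun t => t ^ 2

namespace IsParabolicArc

variable {E F : Type*} [NormedAddCommGroup E] [NormedSpace ℝ E] [NormedAddCommGroup F]
  [NormedSpace ℝ F] {γ : ℝ → E} {x d z : E}

lemma quadratic (x d z : E) : IsParabolicArc (fun t => x + t • d + (t ^ 2 / 2) • z) x d z := by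
  simpa only [IsParabolicArc, sub_self] using isLittleO_zero _ _

lemma add_isLittleO {r : ℝ → E} (hγ : IsParabolicArc γ x d z)
    (hr : r =o[𝓝[>] 0] fun t : ℝ => t ^ 2) : IsParabolicArc (fun t => γ t + r t) x d z :=
  (hγ.add hr).congr_left fun _ => sub_add_eq_add_sub _ _ _

lemma isBigO_sub_sub_smul (hγ : IsParabolicArc γ x d z) :
    (fun t => γ t - x - t • d) =O[𝓝[>] 0] fun t : ℝ => t ^ 2 :=
  (hγ.isBigO.add (isBigO_smul_const (fun t : ℝ => t ^ 2) ((1 / 2 : ℝ) • z))).congr_left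
    fun t => by module

lemma isLittleO_sub_sub_smul (hγ : IsParabolicArc γ x d z) :
    (fun t => γ t - x - t • d) =o[𝓝[>] 0] fun t : ℝ => t := by
  have hsq : (fun t : ℝ => t ^ 2) =o[𝓝[>] 0] fun t : ℝ => t :=
    (isLittleO_pow_id one_lt_two).mono nhdsWithin_le_nhds
  exact hγ.isBigO_sub_sub_smul.trans_isLittleO hsq

lemma isBigO_sub (hγ : IsParabolicArc γ x d z) :
    (fun t => γ t - x) =O[𝓝[>] 0] fun t : ℝ => t :=
  (hγ.isLittleO_sub_sub_smul.isBigO.add (isBigO_smul_const _ d)).congr_left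
    fun _ => sub_add_cancel _ _

lemma tendsto (hγ : IsParabolicArc γ x d z) : Tendsto γ (𝓝[>] 0) (𝓝 x) :=
  tendsto_sub_nhds_zero_iff.1 (hγ.isBigO_sub.trans_tendsto nhdsWithin_le_nhds)

lemma isLittleO_bilinear_sub (hγ : IsParabolicArc γ x d z) (B : E →L[ℝ] E →L[ℝ] F) :
    (fun t => B (γ t - x) (γ t - x) - t ^ 2 • B d d) =o[𝓝[>] 0] fun t : ℝ => t ^ 2 := by
  have hleft : (fun t => B (γ t - x - t • d) (γ t - x)) =o[𝓝[>] 0] fun t : ℝ => t * t :=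
    B.isBoundedBilinearMap.isBigO_comp.trans_isLittleO
      (hγ.isLittleO_sub_sub_smul.norm_left.mul_isBigO hγ.isBigO_sub.norm_left)
  have hright : (fun t => B (t • d) (γ t - x - t • d)) =o[𝓝[>] 0] fun t : ℝ => t * t :=
    B.isBoundedBilinearMap.isBigO_comp.trans_isLittleO
      ((isBigO_smul_const _ d).norm_left.mul_isLittleO hγ.isLittleO_sub_sub_smul.norm_left)
  refine (hleft.add hright).congr (fun t => ?_) fun t => (sq t).symm
  simp only [map_sub, map_smul, _root_.sub_apply, _root_.smul_apply]
  module

lemma comp {φ : E → F} (hγ : IsParabolicArc γ x d z) (hφ : ContDiffAt ℝ 2 φ x) :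
    IsParabolicArc (fun t => φ (γ t)) (φ x) (fderiv ℝ φ x d)
      (fderiv ℝ φ x z + iteratedFDeriv ℝ 2 φ x ![d, d]) := by
  have htaylor := ((isLittleO_sub_taylor_two hφ).comp_tendsto hγ.tendsto).trans_isBigO
    (hγ.isBigO_sub.norm_left.pow 2)
  have hlin := ((fderiv ℝ φ x).isBigO_comp _ _).trans_isLittleO hγ
  have hquad := (hγ.isLittleO_bilinear_sub (fderiv ℝ (fderiv ℝ φ) x)).const_smul_left (1 / 2 : ℝ)
  refine ((htaylor.add hlin).add hquad).congr_left fun t => ?_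
  simp only [iteratedFDeriv_two_apply, cons_val_zero, cons_val_one, _root_.sub_apply,
    Function.comp_apply, map_sub, map_add, map_smul, Pi.smul_apply]
  module

lemma eventually_lt {ψ : ℝ → ℝ} {a c q : ℝ} (hψ : IsParabolicArc ψ a c q) (hc : c ≤ 0)
    (hq : c = 0 → q < 0) : ∀ᶠ t in 𝓝[>] 0, ψ t < a := by
  have hpos : ∀ᶠ t : ℝ in 𝓝[>] 0, 0 < t := self_mem_nhdsWithin
  suffices hneg : ∀ᶠ t in 𝓝[>] 0, ψ t - a < 0 from hneg.mono fun _ => sub_neg.1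
  rcases hc.lt_or_eq with hc | rfl
  · exact eventually_neg_of_isLittleO_sub_mul hc hpos
      (hψ.isLittleO_sub_sub_smul.congr_left fun t => by rw [smul_eq_mul, mul_comm])
  · refine eventually_neg_of_isLittleO_sub_mul (div_neg_of_neg_of_pos (hq rfl) two_pos)
      (hpos.mono fun _ ht => pow_pos ht 2) (hψ.congr_left fun t => ?_)
    simp only [smul_eq_mul]
    ring

end IsParabolicArc

lemma range_pi_eq_top_of_linearIndependent {ι K V : Type*} [Finite ι] [Field K]
    [TopologicalSpace K] [IsTopologicalRing K] [AddCommGroup V] [TopologicalSpace V] [Module K V]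
    {c : ι → V →L[K] K} (hc : LinearIndependent K c) : (ContinuousLinearMap.pi c).range = ⊤ := by
  have hfun : LinearIndependent K fun i => (c i : V → K) :=
    hc.map' (LinearMap.ltoFun K V K K ∘ₗ ContinuousLinearMap.coeLM K)
      (LinearMap.ker_eq_bot.2 DFunLike.coe_injective)
  rw [← span_flip_eq_top_iff_linearIndependent.2 hfun]
  exact (Submodule.span_eq (ContinuousLinearMap.pi c).range).symm

section LevelSet

variable {E F : Type*} [NormedAddCommGroup E] [NormedSpace ℝ E] [CompleteSpace E]
  [NormedAddCommGroup F] [NormedSpace ℝ F] [CompleteSpace F]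

/-- The Lyusternik–Graves theorem, for the level set through `x`. -/
lemma exists_eventually_exists_apply_add_eq_of_range_eq_top {H : E → F} {H' : E →L[ℝ] F} {x : E}
    (hH : HasStrictFDerivAt H H' x) (hsurj : H'.range = ⊤) :
    ∃ C : ℝ, ∀ᶠ w in 𝓝 x, ∃ v, ‖v‖ ≤ C * ‖H w - H x‖ ∧ H (w + v) = H x := by
  obtain ⟨R, hR⟩ := H'.exists_nonlinearRightInverse_of_surjective hsurj
  have : (0 : ℝ) < R.nnnorm := hR
  obtain ⟨s, hs, happrox⟩ := hH.approximates_deriv_on_nhds (c := R.nnnorm⁻¹ / 2)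
    (.inr (by positivity))
  obtain ⟨δ, hδ, hball⟩ := Metric.mem_nhds_iff.1 hs
  have hsmall : ∀ᶠ w in 𝓝 x, 2 * R.nnnorm * ‖H w - H x‖ < δ / 2 := by
    have hcont : ContinuousAt (fun w => 2 * (R.nnnorm : ℝ) * ‖H w - H x‖) x :=
      continuousAt_const.mul (hH.continuousAt.sub continuousAt_const).norm
    exact hcont.eventually_lt continuousAt_const (by simpa using hδ)
  refine ⟨2 * R.nnnorm, ?_⟩
  filter_upwards [Metric.ball_mem_nhds x (half_pos hδ), hsmall] with w hw hr
  have hsub : Metric.closedBall w (2 * R.nnnorm * ‖H w - H x‖) ⊆ s :=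
    (Metric.closedBall_subset_ball' (by linarith [Metric.mem_ball.1 hw])).trans hball
  have hmem : H x ∈ Metric.closedBall (H w)
      (((R.nnnorm : ℝ)⁻¹ - (R.nnnorm⁻¹ / 2 : NNReal)) * (2 * R.nnnorm * ‖H w - H x‖)) := by
    rw [Metric.mem_closedBall', dist_eq_norm]
    push_cast
    field_simp
    linarith
  obtain ⟨y, hy, hHy⟩ :=
    happrox.surjOn_closedBall_of_nonlinearRightInverse R (by positivity) hsub hmem
  exact ⟨y - w, by rwa [← dist_eq_norm], by rwa [add_sub_cancel]⟩

lemma IsParabolicArc.exists_eventually_eq_of_isLittleO {H : E → F} {H' : E →L[ℝ] F} {γ : ℝ → E}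
    {x d z : E} (hγ : IsParabolicArc γ x d z) (hH : HasStrictFDerivAt H H' x)
    (hsurj : H'.range = ⊤) (ho : (fun t => H (γ t) - H x) =o[𝓝[>] 0] fun t : ℝ => t ^ 2) :
    ∃ γ', IsParabolicArc γ' x d z ∧ ∀ᶠ t in 𝓝[>] 0, H (γ' t) = H x := by
  obtain ⟨C, hC⟩ := exists_eventually_exists_apply_add_eq_of_range_eq_top hH hsurj
  obtain ⟨r, hr⟩ := (hγ.tendsto.eventually hC).choice
  have hr_small : r =o[𝓝[>] 0] fun t : ℝ => t ^ 2 :=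
    (IsBigO.of_bound C (hr.mono fun _ h => h.1)).trans_isLittleO ho
  exact ⟨fun t => γ t + r t, hγ.add_isLittleO hr_small, hr.mono fun _ h => h.2⟩

lemma exists_isParabolicArc_of_linearIndependent {ι : Type*} [Finite ι] {h : ι → E → ℝ}
    {x d z : E} (hh : ∀ i, ContDiffAt ℝ 2 (h i) x)
    (hli : LinearIndependent ℝ fun i => fderiv ℝ (h i) x) (hd : ∀ i, fderiv ℝ (h i) x d = 0)
    (hz : ∀ i, fderiv ℝ (h i) x z + iteratedFDeriv ℝ 2 (h i) x ![d, d] = 0) :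
    ∃ γ, IsParabolicArc γ x d z ∧ ∀ᶠ t in 𝓝[>] 0, ∀ i, h i (γ t) = h i x := by
  cases nonempty_fintype ι
  have hH : HasStrictFDerivAt (fun y i => h i y)
      (ContinuousLinearMap.pi fun i => fderiv ℝ (h i) x) x :=
    hasStrictFDerivAt_pi.2 fun i => (hh i).hasStrictFDerivAt two_ne_zero
  have ho : (fun t i => h i (x + t • d + (t ^ 2 / 2) • z) - h i x)
      =o[𝓝[>] 0] fun t : ℝ => t ^ 2 :=
    isLittleO_pi.2 fun i => by
      simpa [IsParabolicArc, hd i, hz i] using (IsParabolicArc.quadratic x d z).comp (hh i)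
  obtain ⟨γ, hγ, hγH⟩ := (IsParabolicArc.quadratic x d z).exists_eventually_eq_of_isLittleO hH
    (range_pi_eq_top_of_linearIndependent hli) ho
  exact ⟨γ, hγ, hγH.mono fun _ => congrFun⟩

end LevelSet

section Alternative

variable {ι κ : Type*} [Fintype ι] [Fintype κ]

lemma nonneg_of_forall_pos_mul_add_nonneg {a b : ℝ} (h : ∀ t > 0, 0 ≤ t * a + b) : 0 ≤ a := by
  by_contra! ha
  have hpos : 0 < (|b| + 1) / -a := div_pos (by positivity) (neg_pos.2 ha)
  have hval : (|b| + 1) / -a * a = -(|b| + 1) := by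
    rw [div_neg, neg_mul, div_mul_cancel₀ _ ha.ne]
  linarith [h _ hpos, le_abs_self b]

lemma exists_nonneg_ne_zero_forall_sum_mul_nonneg {s : Set κ} {V : Set (κ → ℝ)}
    (hV : Convex ℝ V) (hne : V.Nonempty) (h : ∀ v ∈ V, ∃ k ∈ s, 0 ≤ v k) :
    ∃ y : κ → ℝ, y ≠ 0 ∧ 0 ≤ y ∧ (∀ k ∉ s, y k = 0) ∧ ∀ v ∈ V, 0 ≤ ∑ k, y k * v k := by
  let N : Set (κ → ℝ) := s.pi fun _ => Iio 0
  have hdisj : Disjoint N V := disjoint_left.2 fun v hvN hvV =>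
    let ⟨k, hk, hvk⟩ := h v hvV
    (hvN k hk).not_ge hvk
  obtain ⟨φ, u, hN, hVu⟩ := geometric_hahn_banach_open (convex_pi fun _ _ => convex_Iio 0)
    (isOpen_set_pi s.toFinite fun _ _ => isOpen_Iio) hV hdisj
  have hpolar : ∀ w, (∀ k ∈ s, w k ≤ 0) → φ w ≤ 0 := fun w hw => by
    refine neg_nonneg.1 (nonneg_of_forall_pos_mul_add_nonneg (b := u + φ 1) fun t ht => ?_)
    have := hN (t • w - 1) fun k hk => by
      simpa using (mul_nonpos_of_nonneg_of_nonpos ht.le (hw k hk)).trans_lt one_pos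
    rw [map_sub, map_smul, smul_eq_mul] at this
    linarith
  have hu : 0 ≤ u := nonneg_of_forall_pos_mul_add_nonneg (b := φ 1) fun t ht => by
    have := hN (-(t⁻¹ • 1)) fun k _ => by simpa using ht
    rw [map_neg, map_smul, smul_eq_mul, ← mul_lt_mul_iff_right₀ ht, mul_neg,
      mul_inv_cancel_left₀ ht.ne'] at this
    linarith
  let y : κ → ℝ := fun k => φ (Pi.single k 1)
  have hφ : ∀ v, φ v = ∑ k, y k * v k := fun v => by
    conv_lhs => rw [pi_eq_sum_univ' v]
    simp [y, mul_comm]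
  have hy_nonneg : 0 ≤ y := fun k => by
    have := hpolar (-Pi.single k 1) fun j _ => by simp [Pi.single_apply]; split_ifs <;> simp
    rwa [map_neg, neg_nonpos] at this
  refine ⟨y, ?_, hy_nonneg, fun k hk => ?_, fun v hv => hφ v ▸ hu.trans (hVu v hv)⟩
  · intro hy
    obtain ⟨v, hv⟩ := hne
    have hφ_zero : ∀ w, φ w = 0 := fun w => by simp [hφ, hy]
    have hu_pos : 0 < u := hφ_zero (-1) ▸ hN (-1) fun k _ => by simp
    exact (hφ_zero v ▸ hVu v hv).not_gt hu_pos
  · refine (hpolar _ fun j hj => ?_).antisymm (hy_nonneg k)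
    rw [Pi.single_eq_of_ne (ne_of_mem_of_not_mem hj hk)]

/-- Motzkin's transposition theorem, in affine form. -/
lemma exists_multipliers_of_forall_exists_nonneg {E : Type*} [AddCommGroup E] [Module ℝ E]
    {s : Set κ} {a : κ → Module.Dual ℝ E} {b : κ → ℝ} {c : ι → Module.Dual ℝ E} {e : ι → ℝ}
    (hfeas : ∃ z, ∀ i, c i z + e i = 0)
    (h : ∀ z, (∀ i, c i z + e i = 0) → ∃ k ∈ s, 0 ≤ a k z + b k) :
    ∃ (y : κ → ℝ) (lam : ι → ℝ), y ≠ 0 ∧ 0 ≤ y ∧ (∀ k ∉ s, y k = 0) ∧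
      ∑ k, y k • a k + ∑ i, lam i • c i = 0 ∧ 0 ≤ ∑ k, y k * b k + ∑ i, lam i * e i := by
  obtain ⟨z₀, hz₀⟩ := hfeas
  let V : Set (κ → ℝ) := (fun z k => a k z + b k) '' {z | ∀ i, c i z + e i = 0}
  have hV : Convex ℝ V := by
    rintro _ ⟨z, hz, rfl⟩ _ ⟨w, hw, rfl⟩ p q - - hpq
    refine ⟨p • z + q • w, fun i => ?_, funext fun k => ?_⟩
    · simp only [map_add, map_smul, smul_eq_mul]
      linear_combination p * hz i + q * hw i - e i * hpq
    · simp only [map_add, map_smul, smul_eq_mul, Pi.add_apply, Pi.smul_apply]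
      linear_combination -b k * hpq
  obtain ⟨y, hy_ne, hy_nonneg, hy_supp, hyV⟩ := exists_nonneg_ne_zero_forall_sum_mul_nonneg hV
    ⟨_, z₀, hz₀, rfl⟩ (by rintro _ ⟨z, hz, rfl⟩; exact h z hz)
  let ψ : Module.Dual ℝ E := ∑ k, y k • a k
  have hψ : ∀ z, (∀ i, c i z + e i = 0) → 0 ≤ ψ z + ∑ k, y k * b k := fun z hz => by
    simpa [ψ, mul_add, Finset.sum_add_distrib] using hyV _ ⟨z, hz, rfl⟩
  have hker_nonneg : ∀ z, (∀ i, c i z = 0) → 0 ≤ ψ z := fun z hz =>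
    nonneg_of_forall_pos_mul_add_nonneg (b := ψ z₀ + ∑ k, y k * b k) fun t _ => by
      have := hψ (t • z + z₀) fun i => by simp [hz i, hz₀ i]
      simpa [add_assoc] using this
  have hker : ⨅ i, (c i).ker ≤ ψ.ker := fun z hz => by
    have hcz : ∀ i, c i z = 0 := by simpa using hz
    have hneg := hker_nonneg (-z) fun i => by simp [hcz i]
    rw [map_neg] at hneg
    exact le_antisymm (neg_nonneg.1 hneg) (hker_nonneg z hcz)
  obtain ⟨lam, hlam⟩ := (Submodule.mem_span_range_iff_exists_fun ℝ).1
    (neg_mem (mem_span_of_iInf_ker_le_ker hker))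
  have hval : ψ z₀ = ∑ i, lam i * e i := by
    have hlam_z₀ : ∑ i, lam i * c i z₀ = -ψ z₀ := by simpa using LinearMap.congr_fun hlam z₀
    rw [← neg_eq_iff_eq_neg.2 hlam_z₀, ← Finset.sum_neg_distrib]
    exact Finset.sum_congr rfl fun i _ => by linear_combination -lam i * hz₀ i
  refine ⟨y, lam, hy_ne, hy_nonneg, hy_supp, hlam ▸ add_neg_cancel ψ, ?_⟩
  linarith [hψ z₀ hz₀]

lemma exists_ne_zero_sum_smul_eq_zero_of_not_linearIndependent {V : Type*} [AddCommGroup V]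
    [Module ℝ V] {c : ι → V} (hc : ¬LinearIndependent ℝ c) (e : ι → ℝ) :
    ∃ lam : ι → ℝ, lam ≠ 0 ∧ ∑ i, lam i • c i = 0 ∧ 0 ≤ ∑ i, lam i * e i := by
  obtain ⟨lam, hsum, hne⟩ := Fintype.not_linearIndependent_iff.1 hc
  have hlam : lam ≠ 0 := Function.ne_iff.2 hne
  rcases le_total 0 (∑ i, lam i * e i) with he | he
  · exact ⟨lam, hlam, hsum, he⟩
  · exact ⟨-lam, neg_ne_zero.2 hlam, by simpa using hsum, by simpa using he⟩

end Alternative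

/-- `x` is a local weak Pareto minimizer of the objectives `φ k`, `k ∈ s`, on the level set of `h`
through `x`: no nearby point of that level set strictly decreases all of them. Treating the active
inequality constraints of a nonlinear program as further objectives turns its local minimizers into
such points. -/
def IsLocalWeakPareto {ι κ E : Type*} [TopologicalSpace E] (φ : κ → E → ℝ) (s : Set κ)
    (h : ι → E → ℝ) (x : E) : Prop :=
  ∀ᶠ y in 𝓝 x, (∀ i, h i y = h i x) → ∃ k ∈ s, φ k x ≤ φ k y

namespace IsLocalWeakPareto

variable {ι κ E : Type*} [NormedAddCommGroup E] [NormedSpace ℝ E] [CompleteSpace E]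
  {φ : κ → E → ℝ} {s : Set κ} {h : ι → E → ℝ} {x d : E}

lemma exists_second_order_nonneg [Finite ι] [Finite κ] (hx : IsLocalWeakPareto φ s h x)
    (hφ : ∀ k ∈ s, ContDiffAt ℝ 2 (φ k) x) (hh : ∀ i, ContDiffAt ℝ 2 (h i) x)
    (hφd : ∀ k ∈ s, fderiv ℝ (φ k) x d ≤ 0) (hhd : ∀ i, fderiv ℝ (h i) x d = 0)
    (hli : LinearIndependent ℝ fun i => fderiv ℝ (h i) x) {z : E}
    (hz : ∀ i, fderiv ℝ (h i) x z + iteratedFDeriv ℝ 2 (h i) x ![d, d] = 0) :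
    ∃ k ∈ s, fderiv ℝ (φ k) x d = 0 ∧
      0 ≤ fderiv ℝ (φ k) x z + iteratedFDeriv ℝ 2 (φ k) x ![d, d] := by
  by_contra! hdesc
  obtain ⟨γ, hγ, hγh⟩ := exists_isParabolicArc_of_linearIndependent hh hli hhd hz
  have hγφ : ∀ᶠ t in 𝓝[>] 0, ∀ k ∈ s, φ k (γ t) < φ k x :=
    (eventually_all_finite s.toFinite).2 fun k hk =>
      (hγ.comp (hφ k hk)).eventually_lt (hφd k hk) (hdesc k hk)
  obtain ⟨t, hpareto, hth, htφ⟩ := ((hγ.tendsto.eventually hx).and (hγh.and hγφ)).exists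
  obtain ⟨k, hk, hle⟩ := hpareto hth
  exact (htφ k hk).not_ge hle

theorem exists_second_order_multipliers [Fintype ι] [Fintype κ]
    (hx : IsLocalWeakPareto φ s h x)
    (hφ : ∀ k ∈ s, ContDiffAt ℝ 2 (φ k) x) (hh : ∀ i, ContDiffAt ℝ 2 (h i) x)
    (hφd : ∀ k ∈ s, fderiv ℝ (φ k) x d ≤ 0) (hhd : ∀ i, fderiv ℝ (h i) x d = 0) :
    ∃ (y : κ → ℝ) (lam : ι → ℝ), (y ≠ 0 ∨ lam ≠ 0) ∧ 0 ≤ y ∧ (∀ k ∉ s, y k = 0) ∧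
      ∑ k, y k • fderiv ℝ (φ k) x + ∑ i, lam i • fderiv ℝ (h i) x = 0 ∧
      0 ≤ ∑ k, y k * iteratedFDeriv ℝ 2 (φ k) x ![d, d] +
        ∑ i, lam i * iteratedFDeriv ℝ 2 (h i) x ![d, d] := by
  by_cases hli : LinearIndependent ℝ fun i => fderiv ℝ (h i) x
  · obtain ⟨z, hz⟩ := LinearMap.range_eq_top.1 (range_pi_eq_top_of_linearIndependent hli)
      fun i => -iteratedFDeriv ℝ 2 (h i) x ![d, d]
    obtain ⟨y, lam, hy, hy_nonneg, hy_supp, hgrad, hhess⟩ :=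
      exists_multipliers_of_forall_exists_nonneg (s := {k ∈ s | fderiv ℝ (φ k) x d = 0})
        (a := fun k => fderiv ℝ (φ k) x) (b := fun k => iteratedFDeriv ℝ 2 (φ k) x ![d, d])
        (c := fun i => fderiv ℝ (h i) x) (e := fun i => iteratedFDeriv ℝ 2 (h i) x ![d, d])
        ⟨z, fun i => eq_neg_iff_add_eq_zero.1 (congrFun hz i)⟩ fun w hw => by
          obtain ⟨k, hk, hkd, hkw⟩ := hx.exists_second_order_nonneg hφ hh hφd hhd hli hw
          exact ⟨k, ⟨hk, hkd⟩, hkw⟩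
    refine ⟨y, lam, .inl hy, hy_nonneg, fun k hk => hy_supp k fun h => hk h.1, ?_, hhess⟩
    ext v
    simpa using LinearMap.congr_fun hgrad v
  · obtain ⟨lam, hlam, hgrad, hhess⟩ :=
      exists_ne_zero_sum_smul_eq_zero_of_not_linearIndependent hli
        fun i => iteratedFDeriv ℝ 2 (h i) x ![d, d]
    exact ⟨0, lam, .inr hlam, le_rfl, fun _ _ => rfl, by simpa using hgrad, by simpa using hhess⟩

end IsLocalWeakPareto

section NonlinearProgram

variable {ι κ E : Type*}

/-- The generalized Lagrangian of a nonlinear program with arbitrary finite families of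
constraints; `LagrG` is the case of constraints indexed by `Fin` on `Fin n → ℝ`. -/
def generalizedLagrangian [Fintype ι] [Fintype κ] (f : E → ℝ) (h : ι → E → ℝ) (g : κ → E → ℝ)
    (l0 : ℝ) (lam : ι → ℝ) (mu : κ → ℝ) (y : E) : ℝ :=
  l0 * f y + ∑ i, lam i * h i y + ∑ j, mu j * g j y

-- The index set consists of `none` (vacuously) and `some j` for the active constraints `j`.
lemma isLocalWeakPareto_of_isLocalMinOn [TopologicalSpace E] [Finite κ] {f : E → ℝ}
    {h : ι → E → ℝ} {g : κ → E → ℝ} {x : E} (hg : ∀ j, ContinuousAt (g j) x)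
    (hfeas : (∀ i, h i x = 0) ∧ ∀ j, g j x ≤ 0)
    (hmin : IsLocalMinOn f {y | (∀ i, h i y = 0) ∧ ∀ j, g j y ≤ 0} x) :
    IsLocalWeakPareto (fun k : Option κ => k.elim f g) {k | ∀ j ∈ k, g j x = 0} h x := by
  have hinactive : ∀ᶠ y in 𝓝 x, ∀ j, g j x ≠ 0 → g j y < 0 :=
    eventually_all.2 fun j => by
      by_cases hj : g j x = 0
      · simp [hj]
      · filter_upwards [(hg j).eventually_lt_const ((hfeas.2 j).lt_of_ne hj)] with y hy _ using hy
  filter_upwards [hinactive, eventually_nhdsWithin_iff.1 hmin] with y hy hymin hyh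
  by_contra! hdesc
  have hyg : ∀ j, g j y ≤ 0 := fun j => by
    by_cases hj : g j x = 0
    · exact ((hdesc (some j) (by simpa using hj)).trans_eq hj).le
    · exact (hy j hj).le
  exact (hdesc none (by simp)).not_ge (hymin ⟨fun i => (hyh i).trans (hfeas.1 i), hyg⟩)

variable [Fintype ι] [Fintype κ] [NormedAddCommGroup E] [NormedSpace ℝ E] {f : E → ℝ}
  {h : ι → E → ℝ} {g : κ → E → ℝ} {x : E}

lemma fderiv_generalizedLagrangian (hf : DifferentiableAt ℝ f x)
    (hh : ∀ i, DifferentiableAt ℝ (h i) x) (hg : ∀ j, DifferentiableAt ℝ (g j) x)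
    (l0 : ℝ) (lam : ι → ℝ) (mu : κ → ℝ) :
    fderiv ℝ (generalizedLagrangian f h g l0 lam mu) x =
      l0 • fderiv ℝ f x + ∑ i, lam i • fderiv ℝ (h i) x + ∑ j, mu j • fderiv ℝ (g j) x :=
  (((hf.hasFDerivAt.const_mul l0).add
    (.fun_sum fun i _ => (hh i).hasFDerivAt.const_mul (lam i))).add
    (.fun_sum fun j _ => (hg j).hasFDerivAt.const_mul (mu j))).fderiv

lemma iteratedFDeriv_generalizedLagrangian {r : ℕ} (hf : ContDiffAt ℝ r f x)
    (hh : ∀ i, ContDiffAt ℝ r (h i) x) (hg : ∀ j, ContDiffAt ℝ r (g j) x)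
    (l0 : ℝ) (lam : ι → ℝ) (mu : κ → ℝ) :
    iteratedFDeriv ℝ r (generalizedLagrangian f h g l0 lam mu) x =
      l0 • iteratedFDeriv ℝ r f x + ∑ i, lam i • iteratedFDeriv ℝ r (h i) x +
        ∑ j, mu j • iteratedFDeriv ℝ r (g j) x := by
  have hf' : ContDiffAt ℝ r (fun y => l0 * f y) x := contDiffAt_const.mul hf
  have hh' : ∀ i ∈ Finset.univ, ContDiffAt ℝ r (fun y => lam i * h i y) x :=
    fun i _ => contDiffAt_const.mul (hh i)
  have hg' : ∀ j ∈ Finset.univ, ContDiffAt ℝ r (fun y => mu j * g j y) x :=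
    fun j _ => contDiffAt_const.mul (hg j)
  have hsmul : ∀ (c : ℝ) {ψ : E → ℝ}, ContDiffAt ℝ r ψ x →
      iteratedFDeriv ℝ r (fun y => c * ψ y) x = c • iteratedFDeriv ℝ r ψ x :=
    fun c _ hψ => iteratedFDeriv_const_smul_apply' (a := c) hψ
  unfold generalizedLagrangian
  rw [fun_iteratedFDeriv_add_apply (hf'.add (.sum hh')) (.sum hg'),
    fun_iteratedFDeriv_add_apply hf' (.sum hh'), iteratedFDeriv_fun_sum_apply hh',
    iteratedFDeriv_fun_sum_apply hg', hsmul l0 hf]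
  simp only [hsmul _ (hh _), hsmul _ (hg _)]

theorem stmt1_general [CompleteSpace E] (hf : ContDiffAt ℝ 2 f x)
    (hh : ∀ i, ContDiffAt ℝ 2 (h i) x) (hg : ∀ j, ContDiffAt ℝ 2 (g j) x)
    (hfeas : (∀ i, h i x = 0) ∧ ∀ j, g j x ≤ 0)
    (hmin : IsLocalMinOn f {y | (∀ i, h i y = 0) ∧ ∀ j, g j y ≤ 0} x) {d : E}
    (hfd : fderiv ℝ f x d ≤ 0) (hhd : ∀ i, fderiv ℝ (h i) x d = 0)
    (hgd : ∀ j, g j x = 0 → fderiv ℝ (g j) x d ≤ 0) :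
    ∃ (l0 : ℝ) (lam : ι → ℝ) (mu : κ → ℝ),
      (0 ≤ l0 ∧ (∀ j, 0 ≤ mu j) ∧ fderiv ℝ (generalizedLagrangian f h g l0 lam mu) x = 0 ∧
        (∀ j, mu j * g j x = 0) ∧ (l0, lam, mu) ≠ (0, 0, 0)) ∧
      0 ≤ iteratedFDeriv ℝ 2 (generalizedLagrangian f h g l0 lam mu) x ![d, d] := by
  have hpareto := isLocalWeakPareto_of_isLocalMinOn (fun j => (hg j).continuousAt) hfeas hmin
  obtain ⟨y, lam, hne, hy_nonneg, hy_supp, hgrad, hhess⟩ :=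
    hpareto.exists_second_order_multipliers (d := d)
      (by rintro (_ | j) _; exacts [hf, hg j]) hh
      (by rintro (_ | j) hk; exacts [hfd, hgd j (hk j rfl)]) hhd
  simp only [Fintype.sum_option, Option.elim] at hgrad hhess
  refine ⟨y none, lam, fun j => y (some j), ⟨hy_nonneg none, fun j => hy_nonneg (some j), ?_,
    fun j => ?_, fun hzero => ?_⟩, ?_⟩
  · rw [fderiv_generalizedLagrangian (hf.differentiableAt two_ne_zero)
      (fun i => (hh i).differentiableAt two_ne_zero) fun j => (hg j).differentiableAt two_ne_zero,
      add_right_comm, hgrad]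
  · by_cases hj : g j x = 0
    · exact mul_eq_zero_of_right _ hj
    · exact mul_eq_zero_of_left (hy_supp (some j) fun hmem => hj (hmem j rfl)) _
  · obtain ⟨h0, hlam, hmu⟩ : _ ∧ _ ∧ _ := by simpa only [Prod.mk.injEq] using hzero
    refine hne.elim (fun hy => hy (funext ?_)) fun hlam' => hlam' hlam
    rintro (_ | j)
    exacts [h0, congrFun hmu j]
  · rw [iteratedFDeriv_generalizedLagrangian hf hh hg]
    simpa [add_right_comm] using hhess

end NonlinearProgram

/-- At a local minimizer, for every critical direction there is a Fritz John
multiplier (depending on the direction) making the generalized Hessian quadratic form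
nonnegative. -/
theorem stmt1 {n m p : ℕ} (f : (Fin n → ℝ) → ℝ) (h : Fin m → (Fin n → ℝ) → ℝ)
    (g : Fin p → (Fin n → ℝ) → ℝ)
    (hf : ContDiff ℝ 2 f) (hh : ∀ i, ContDiff ℝ 2 (h i)) (hg : ∀ j, ContDiff ℝ 2 (g j))
    (xs : Fin n → ℝ) (hfeas : Feas h g xs)
    (hmin : IsLocalMinOn f {x | Feas h g x} xs) :
    ∀ d : Fin n → ℝ, critCone f h g xs d →
      ∃ (l0 : ℝ) (lam : Fin m → ℝ) (mu : Fin p → ℝ), IsFJMult f h g xs l0 lam mu ∧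
        0 ≤ hessQ (LagrG f h g l0 lam mu) xs d := by
  exact fun d hd => stmt1_general hf.contDiffAt (fun i => (hh i).contDiffAt)
    (fun j => (hg j).contDiffAt) hfeas hmin hd.1.le hd.2.1 hd.2.2
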